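/- Let (a_k) be a sequence in ℝ³ and (ρ_k) a sequence of reals with ρ_k > 1 for all k, ρ_k → ∞, and |a_k| − ρ_k → ∞ as k → ∞. Then lim_{k → ∞} ρ_k^{-2} · ∫_1^{ρ_k} ( ∫_{S_t(a_k)} |x|^{-2} dH²(x) ) dt = 0. -/

import Mathlib

open MeasureTheory Filter

/-! On a sphere `S_t(a)` of radius `t < ‖a‖` the integrand `‖x‖^(-p)` is at most `(‖a‖ - t)^(-p)`,
and the sphere has area `C t^d`, where `C < ∞` is the area of the unit sphere. For `t ≤ r` the
factor `t^d` is at most `r^d`, which the normalization cancels, and what remains is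
`C ∫ (‖a‖ - t)^(-p) dt ≤ C (‖a‖ - r)^(1 - p) / (p - 1)`, which vanishes in the limit as `p > 1`.

Finiteness of `C` is a local matter: near `x` the unit sphere is the radial projection of a bounded
piece of the supporting hyperplane at `x`, and this projection is Lipschitz off the unit ball. -/

open Metric Module Set
open scoped Pointwise Topology

section RadialProjection

variable {E : Type*} [NormedAddCommGroup E] [NormedSpace ℝ E]

lemma norm_normalize_sub_normalize_le {x : E} (hx : x ≠ 0) (y : E) :
    ‖NormedSpace.normalize x - NormedSpace.normalize y‖ ≤ 2 * ‖x‖⁻¹ * ‖x - y‖ := by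
  have hx' : ‖x‖ ≠ 0 := norm_ne_zero_iff.2 hx
  have split : NormedSpace.normalize x - NormedSpace.normalize y =
      ‖x‖⁻¹ • ((x - y) + (‖y‖ - ‖x‖) • NormedSpace.normalize y) := by
    rw [sub_smul, NormedSpace.norm_smul_normalize, smul_add, smul_sub, smul_sub, inv_smul_smul₀ hx']
    simp only [NormedSpace.normalize]
    abel
  have norm_le_one : ‖NormedSpace.normalize y‖ ≤ 1 := by
    rcases eq_or_ne y 0 with rfl | hy
    · simp
    · exact (NormedSpace.norm_normalize_eq_one_iff.2 hy).le
  calc ‖NormedSpace.normalize x - NormedSpace.normalize y‖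
      ≤ ‖x‖⁻¹ * (‖x - y‖ + |‖y‖ - ‖x‖|) := by
        rw [split, norm_smul, norm_inv, norm_norm]
        gcongr
        refine norm_add_le_of_le le_rfl ?_
        rw [norm_smul, Real.norm_eq_abs]
        exact mul_le_of_le_one_right (abs_nonneg _) norm_le_one
    _ ≤ ‖x‖⁻¹ * (‖x - y‖ + ‖x - y‖) := by
        gcongr
        exact (abs_norm_sub_norm_le y x).trans_eq (norm_sub_rev y x)
    _ = 2 * ‖x‖⁻¹ * ‖x - y‖ := by ring

lemma lipschitzOnWith_normalize :
    LipschitzOnWith 2 (NormedSpace.normalize : E → E) {x | 1 ≤ ‖x‖} := by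
  refine LipschitzOnWith.of_dist_le_mul fun x (hx : 1 ≤ ‖x‖) y _ ↦ ?_
  rw [dist_eq_norm, dist_eq_norm, NNReal.coe_ofNat]
  refine (norm_normalize_sub_normalize_le (norm_pos_iff.1 (by linarith)) y).trans ?_
  gcongr
  linarith [inv_le_one_of_one_le₀ hx]

variable {f : StrongDual ℝ E} {x : E}

lemma lipschitzWith_normalize_add_ker (hf : ‖f‖ ≤ 1) (hfx : f x = 1) :
    LipschitzWith 2 fun p : f.ker ↦ NormedSpace.normalize (x + p) := by
  have one_le_norm (p : f.ker) : 1 ≤ ‖x + p‖ := by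
    have hp : f p = 0 := p.2
    simpa [hfx, hp] using f.le_of_opNorm_le hf (x + p)
  have translate : LipschitzWith 1 fun p : f.ker ↦ x + (p : E) :=
    ((IsometryEquiv.addLeft x).isometry.comp isometry_subtype_coe).lipschitz
  rw [← lipschitzOnWith_univ, ← mul_one 2]
  exact lipschitzOnWith_normalize.comp translate.lipschitzOnWith fun p _ ↦ one_le_norm p

lemma sphere_inter_halfSpace_subset_image_normalize (hx : ‖x‖ = 1) (hfx : f x = 1) :
    sphere 0 1 ∩ {y | 1 / 2 < f y} ⊆
      (fun p : f.ker ↦ NormedSpace.normalize (x + p)) '' closedBall 0 3 := by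
  rintro y ⟨hy, hfy : 1 / 2 < f y⟩
  rw [mem_sphere_zero_iff_norm] at hy
  have hfy0 : 0 < f y := by linarith
  let p : f.ker := ⟨(f y)⁻¹ • y - x, by simp [hfx, hfy0.ne']⟩
  refine ⟨p, ?_, ?_⟩
  · rw [mem_closedBall_zero_iff]
    calc ‖p‖ ≤ ‖(f y)⁻¹ • y‖ + ‖x‖ := norm_sub_le _ _
      _ = (f y)⁻¹ + 1 := by rw [norm_smul, hy, hx, mul_one, Real.norm_of_nonneg (by positivity)]
      _ ≤ (1 / 2)⁻¹ + 1 := by gcongr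
      _ = 3 := by norm_num
  · simp [p, NormedSpace.normalize_smul_of_pos (inv_pos.2 hfy0),
      NormedSpace.normalize_eq_self_of_norm_eq_one hy]

end RadialProjection

section SphereArea

variable {E : Type*} [NormedAddCommGroup E] [NormedSpace ℝ E] [MeasurableSpace E] [BorelSpace E]

lemma hausdorffMeasure_sphere {d : ℝ} (hd : 0 ≤ d) (a : E) {t : ℝ} (ht : 0 < t) :
    μH[d] (sphere a t) = ENNReal.ofReal (t ^ d) * μH[d] (sphere (0 : E) 1) := by
  have affine : sphere a t = a +ᵥ t • sphere (0 : E) 1 := by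
    simp [smul_sphere' ht.ne', abs_of_pos ht]
  rw [affine, hausdorffMeasure_vadd _ (.inl hd),
    Measure.hausdorffMeasure_smul₀ hd ht.ne', ← Real.toNNReal_eq_nnnorm_of_nonneg ht.le,
    ENNReal.smul_def, smul_eq_mul, ENNReal.coe_rpow_of_nonneg _ hd,
    ← ENNReal.ofReal_rpow_of_pos ht, ENNReal.ofReal]

variable {d : ℕ}

lemma hausdorffMeasure_unitSphere_lt_top (hd : finrank ℝ E = d + 1) :
    μH[d] (sphere (0 : E) 1) < ⊤ := by
  have : FiniteDimensional ℝ E := .of_finrank_eq_succ hd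
  refine (isCompact_sphere 0 1).measure_lt_top_of_nhdsWithin fun x hx ↦ ?_
  rw [mem_sphere_zero_iff_norm] at hx
  obtain ⟨f, hf, hfx⟩ := exists_dual_vector ℝ x (by simp [hx])
  replace hfx : f x = 1 := by simpa [hx] using hfx
  have finrank_ker : finrank ℝ f.ker = d := by
    have f_ne_zero : f.toLinearMap ≠ 0 := fun h ↦ by simpa [hfx] using DFunLike.congr_fun h x
    have := Dual.finrank_ker_add_one_of_ne_zero f_ne_zero
    omega
  have ball_lt_top : μH[d] (closedBall (0 : f.ker) 3) < ⊤ := by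
    rw [← finrank_ker]
    exact (isCompact_closedBall _ _).measure_lt_top
  refine ⟨sphere 0 1 ∩ {y | 1 / 2 < f y}, ?_, ?_⟩
  · refine inter_mem_nhdsWithin _ (f.continuous.continuousAt.eventually_const_lt ?_)
    norm_num [hfx]
  · calc μH[d] (sphere 0 1 ∩ {y | 1 / 2 < f y})
        ≤ μH[d] ((fun p : f.ker ↦ NormedSpace.normalize (x + p)) '' closedBall 0 3) :=
          measure_mono (sphere_inter_halfSpace_subset_image_normalize hx hfx)
      _ ≤ 2 ^ (d : ℝ) * μH[d] (closedBall (0 : f.ker) 3) :=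
          (lipschitzWith_normalize_add_ker hf.le hfx).hausdorffMeasure_image_le d.cast_nonneg _
      _ < ⊤ := ENNReal.mul_lt_top (by finiteness) ball_lt_top

end SphereArea

section ShellIntegral

lemma integral_sub_rpow_neg_le {p R r s : ℝ} (hp : 1 < p) (hsr : s ≤ r) (hrR : r < R) :
    ∫ t in s..r, (R - t) ^ (-p) ≤ (R - r) ^ (1 - p) / (p - 1) := by
  have : 0 < p - 1 := by linarith
  have zero_notMem : (0 : ℝ) ∉ uIcc (R - r) (R - s) := notMem_uIcc_of_lt (by linarith) (by linarith)
  calc ∫ t in s..r, (R - t) ^ (-p)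
      = ((R - r) ^ (1 - p) - (R - s) ^ (1 - p)) / (p - 1) := by
        rw [intervalIntegral.integral_comp_sub_left (fun u ↦ u ^ (-p)),
          integral_rpow (.inr ⟨by linarith, zero_notMem⟩), ← neg_div_neg_eq]
        ring_nf
    _ ≤ (R - r) ^ (1 - p) / (p - 1) := by
        gcongr
        exact sub_le_self _ (Real.rpow_nonneg (by linarith) _)

variable {E : Type*} [NormedAddCommGroup E] [NormedSpace ℝ E] [MeasurableSpace E] [BorelSpace E]
  {d : ℕ} {p : ℝ} {a : E}

lemma norm_setIntegral_sphere_rpow_neg_le (hd : finrank ℝ E = d + 1) (hp : 0 ≤ p) {t : ℝ}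
    (ht : 0 < t) (hta : t < ‖a‖) :
    ‖∫ x in sphere a t, ‖x‖ ^ (-p) ∂μH[d]‖ ≤
      (‖a‖ - t) ^ (-p) * (t ^ d * μH[d].real (sphere (0 : E) 1)) := by
  have area : μH[d] (sphere a t) = ENNReal.ofReal (t ^ d) * μH[d] (sphere (0 : E) 1) := by
    simpa using hausdorffMeasure_sphere d.cast_nonneg a ht
  have area_lt_top : μH[d] (sphere a t) < ⊤ :=
    area ▸ ENNReal.mul_lt_top ENNReal.ofReal_lt_top (hausdorffMeasure_unitSphere_lt_top hd)
  have bound (x : E) (hx : x ∈ sphere a t) : ‖‖x‖ ^ (-p)‖ ≤ (‖a‖ - t) ^ (-p) := by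
    have hx' : ‖a‖ - t ≤ ‖x‖ := by
      have : ‖a - x‖ = t := by rwa [← dist_eq_norm, dist_comm]
      linarith [norm_sub_norm_le a x]
    rw [Real.norm_of_nonneg (by positivity)]
    exact Real.rpow_le_rpow_of_nonpos (by linarith) hx' (by linarith)
  convert norm_setIntegral_le_of_norm_le_const area_lt_top bound using 2
  rw [measureReal_def, measureReal_def, area, ENNReal.toReal_mul,
    ENNReal.toReal_ofReal (by positivity)]

lemma norm_integral_setIntegral_sphere_rpow_neg_le (hd : finrank ℝ E = d + 1) (hp : 1 < p)
    {s r : ℝ} (hs : 0 ≤ s) (hsr : s ≤ r) (hra : r < ‖a‖) :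
    ‖∫ t in s..r, ∫ x in sphere a t, ‖x‖ ^ (-p) ∂μH[d]‖ ≤
      (‖a‖ - r) ^ (1 - p) / (p - 1) * (r ^ d * μH[d].real (sphere (0 : E) 1)) := by
  set C := μH[d].real (sphere (0 : E) 1)
  have integrable : IntervalIntegrable (fun t ↦ (‖a‖ - t) ^ (-p) * (r ^ d * C)) volume s r := by
    refine ContinuousOn.intervalIntegrable ?_
    refine ((continuousOn_const.sub continuousOn_id).rpow_const fun t ht ↦ .inl ?_).mul_const _
    rw [uIcc_of_le hsr] at ht
    exact (sub_pos.2 (ht.2.trans_lt hra)).ne'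
  have shell (t : ℝ) (ht : t ∈ Ioc s r) :
      ‖∫ x in sphere a t, ‖x‖ ^ (-p) ∂μH[d]‖ ≤ (‖a‖ - t) ^ (-p) * (r ^ d * C) := by
    have ht0 : 0 < t := hs.trans_lt ht.1
    have hta : t < ‖a‖ := ht.2.trans_lt hra
    have : 0 < ‖a‖ - t := sub_pos.2 hta
    refine (norm_setIntegral_sphere_rpow_neg_le hd (by linarith) ht0 hta).trans ?_
    gcongr
    exact ht.2
  calc ‖∫ t in s..r, ∫ x in sphere a t, ‖x‖ ^ (-p) ∂μH[d]‖
      ≤ ∫ t in s..r, (‖a‖ - t) ^ (-p) * (r ^ d * C) :=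
        intervalIntegral.norm_integral_le_of_norm_le hsr (.of_forall shell) integrable
    _ = (∫ t in s..r, (‖a‖ - t) ^ (-p)) * (r ^ d * C) := intervalIntegral.integral_mul_const _ _
    _ ≤ (‖a‖ - r) ^ (1 - p) / (p - 1) * (r ^ d * C) := by
        have : 0 ≤ r := hs.trans hsr
        gcongr
        exact integral_sub_rpow_neg_le hp hsr hra

end ShellIntegral

theorem offcenter_quadratic_shell_integral_small_general
    {E : Type*} [NormedAddCommGroup E] [NormedSpace ℝ E] [MeasurableSpace E] [BorelSpace E]
    {d : ℕ} (hd : finrank ℝ E = d + 1) {p : ℝ} (hp : 1 < p) {s : ℝ} (hs : 0 ≤ s)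
    {ι : Type*} {l : Filter ι} {a : ι → E} {ρ : ι → ℝ} (hsρ : ∀ᶠ k in l, s < ρ k)
    (haρ : Tendsto (fun k ↦ ‖a k‖ - ρ k) l atTop) :
    Tendsto (fun k ↦ (ρ k ^ d)⁻¹ * ∫ t in s..ρ k, ∫ x in sphere (a k) t, ‖x‖ ^ (-p) ∂μH[d])
      l (𝓝 0) := by
  set C := μH[d].real (sphere (0 : E) 1)
  have majorant_tendsto :
      Tendsto (fun k ↦ (‖a k‖ - ρ k) ^ (1 - p) / (p - 1) * C) l (𝓝 0) := by
    have decay : Tendsto (fun k ↦ (‖a k‖ - ρ k) ^ (1 - p)) l (𝓝 0) := by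
      simpa only [neg_sub, Function.comp_def] using
        (tendsto_rpow_neg_atTop (sub_pos.2 hp)).comp haρ
    simpa using (decay.div_const (p - 1)).mul_const C
  refine squeeze_zero_norm' ?_ majorant_tendsto
  filter_upwards [hsρ, haρ.eventually_gt_atTop 0] with k hsk hk
  have hρd : 0 < ρ k ^ d := pow_pos (hs.trans_lt hsk) d
  rw [norm_mul, norm_inv, Real.norm_of_nonneg hρd.le, inv_mul_le_iff₀ hρd]
  refine (norm_integral_setIntegral_sphere_rpow_neg_le hd hp hs hsk.le (sub_pos.1 hk)).trans_eq ?_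
  ring

/-- If `ρ_k > 1`, `ρ_k → ∞` and `‖a_k‖ - ρ_k → ∞`, then
`ρ_k⁻² ∫_1^{ρ_k} (∫_{S_t(a_k)} ‖x‖⁻² dH²) dt → 0`. -/
theorem offcenter_quadratic_shell_integral_small
    (a : ℕ → EuclideanSpace ℝ (Fin 3)) (ρ : ℕ → ℝ)
    (hρ1 : ∀ k, 1 < ρ k)
    (hρ : Tendsto ρ atTop atTop)
    (haρ : Tendsto (fun k => ‖a k‖ - ρ k) atTop atTop) :
    Tendsto (fun k => (ρ k ^ 2)⁻¹ *
        ∫ t in (1 : ℝ)..(ρ k), ∫ x in Metric.sphere (a k) t, (‖x‖ ^ 2)⁻¹ ∂μH[2])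
      atTop (nhds 0) := by
  simpa [Real.rpow_neg] using offcenter_quadratic_shell_integral_small_general (d := 2)
    finrank_euclideanSpace_fin one_lt_two zero_le_one (.of_forall hρ1) haρ
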